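/- Let k ≥ 2 and 0 < n < 2k−2 be integers and let P be a positive definite integral binary quadratic form of discriminant d < 0 whose CM point τ_P satisfies Re(Mτ_P) ≠ 0 for all M ∈ SL₂(ℤ). Then the period r_n(f_{k,P}) = ∫₀^∞ f_{k,P}(iy) y^n dy is a real number if n is odd, and a purely imaginary number if n is even. (Equivalently, r_n(f_{k,P}^ε) = 0 where ε is the sign of (−1)^n and f_{k,P}^+ := ½(f_{k,P}+f_{k,P'}), f_{k,P}^− := (i/2)(f_{k,P}−f_{k,P'}) with P' := [a,−b,c].) -/

import Mathlib

open Complex MeasureTheory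
open scoped Real

noncomputable section

namespace LHMF

abbrev SL2Z := Matrix.SpecialLinearGroup (Fin 2) ℤ

/-- Möbius action of `SL₂(ℤ)` on `ℂ`. -/
def moeb (M : SL2Z) (τ : ℂ) : ℂ :=
  ((M.1 0 0 : ℂ) * τ + (M.1 0 1 : ℂ)) / ((M.1 1 0 : ℂ) * τ + (M.1 1 1 : ℂ))

/-- Automorphy factor `j(M,τ) = cτ + d`. -/
def jfac (M : SL2Z) (τ : ℂ) : ℂ := (M.1 1 0 : ℂ) * τ + (M.1 1 1 : ℂ)

/-- `E₁`: union of all `SL₂(ℤ)`-translates of the positive imaginary axis. -/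
def E1 : Set ℂ := ⋃ M : SL2Z, (fun y : ℝ => moeb M ((y : ℂ) * Complex.I)) '' Set.Ioi 0

/-- Wirtinger derivative `∂f/∂τ`. -/
def dtau (f : ℂ → ℂ) (τ : ℂ) : ℂ :=
  (fderiv ℝ f τ 1 - Complex.I * fderiv ℝ f τ Complex.I) / 2

/-- Wirtinger derivative `∂f/∂τ̄`. -/
def dtaubar (f : ℂ → ℂ) (τ : ℂ) : ℂ :=
  (fderiv ℝ f τ 1 + Complex.I * fderiv ℝ f τ Complex.I) / 2

/-- The operator `ξ_κ f = 2i v^κ conj(∂f/∂τ̄)`. -/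
def xiOp (κ : ℤ) (f : ℂ → ℂ) (τ : ℂ) : ℂ :=
  2 * Complex.I * ((τ.im : ℂ) ^ κ) * starRingEnd ℂ (dtaubar f τ)

/-- The operator `𝒟 = (1/(2πi)) ∂/∂τ`. -/
def Dop (f : ℂ → ℂ) : ℂ → ℂ := fun τ => (2 * (π : ℂ) * Complex.I)⁻¹ * dtau f τ

/-- Maass raising operator of weight `κ`. -/
def raiseOp (κ : ℤ) (f : ℂ → ℂ) (τ : ℂ) : ℂ :=
  2 * Complex.I * dtau f τ + (κ : ℂ) * (τ.im : ℂ)⁻¹ * f τ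

/-- Iterated raising operator `R_κ^m = R_{κ+2m-2} ∘ ⋯ ∘ R_{κ+2} ∘ R_κ`. -/
def raiseIter (κ : ℤ) : ℕ → (ℂ → ℂ) → (ℂ → ℂ)
  | 0 => fun f => f
  | m + 1 => fun f => raiseOp (κ + 2 * m) (raiseIter κ m f)

/-- Petersson's Poincaré series `H_{k,k-1}(z,τ)`. -/
def Hpet (k : ℕ) (z τ : ℂ) : ℂ :=
  ∑' M : SL2Z, jfac M τ ^ (2 * k - 2) * ((moeb M τ).im : ℂ) ^ (2 * k - 1) *
    (z - moeb M τ)⁻¹ * (z - starRingEnd ℂ (moeb M τ)) ^ (1 - 2 * (k : ℤ))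

/-- The locally harmonic Maass form `H_{1-k,n}`. -/
def Hlhmf (k n : ℕ) (τ : ℂ) : ℂ :=
  (2 * Complex.I) ^ (2 * k - 2) / (2 * (π : ℂ)) *
    ∫ y in Set.Ioi (0 : ℝ), Hpet k ((y : ℂ) * Complex.I) τ * (y : ℂ) ^ n

/-- The cusp form `R_n` of weight `2k`. -/
def Rnform (k n : ℕ) (τ : ℂ) : ℂ :=
  (2 : ℂ) ^ (2 * k - 3) / (Complex.I ^ (2 * k - 1 - n) * (Nat.choose (2 * k - 2) n : ℂ) * (π : ℂ)) *
    ∑' M : SL2Z, jfac M τ ^ (-2 * (k : ℤ)) * moeb M τ ^ (-(n : ℤ) - 1)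

/-- Holomorphic Eichler integral of `f` (weight `2k`), along a vertical path. -/
def eichlerHol (k : ℕ) (f : ℂ → ℂ) (τ : ℂ) : ℂ :=
  (-2 * (π : ℂ) * Complex.I) ^ (2 * k - 1) / (Nat.factorial (2 * k - 2) : ℂ) *
    ∫ t in Set.Ioi (0 : ℝ), f (τ + (t : ℂ) * Complex.I) * ((t : ℂ) * Complex.I) ^ (2 * k - 2) *
      Complex.I

/-- Non-holomorphic Eichler integral `f^*` of `f` (weight `2k`), along a vertical path. -/
def eichlerStar (k : ℕ) (f : ℂ → ℂ) (τ : ℂ) : ℂ :=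
  (-2 * Complex.I) ^ (1 - 2 * (k : ℤ)) *
    ∫ t in Set.Ioi (0 : ℝ),
      starRingEnd ℂ (f (-(starRingEnd ℂ (-(starRingEnd ℂ τ) + (t : ℂ) * Complex.I)))) *
        (-(starRingEnd ℂ τ) + (t : ℂ) * Complex.I + τ) ^ (2 * k - 2) * Complex.I

/-- Bernoulli polynomial evaluated at a complex number. -/
def bernC (m : ℕ) (τ : ℂ) : ℂ := Polynomial.aeval τ (Polynomial.bernoulli m)

/-- Periodized Bernoulli polynomial `𝔹_m(τ) = B_m(τ - ⌊Re τ⌋)`. -/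
def bernPer (m : ℕ) (τ : ℂ) : ℂ := bernC m (τ - (⌊τ.re⌋ : ℂ))

/-- The period `r_n(E_{2k})` of the Eisenstein series, for `0 < n < 2k-2`. -/
def rnE (k n : ℕ) : ℚ :=
  if n % 2 = 0 then 0
  else (-1) ^ ((n - 1) / 2) * (2 * (k : ℚ)) * bernoulli (n + 1) * bernoulli (2 * k - 1 - n) /
    (bernoulli (2 * k) * ((n : ℚ) + 1) * ((2 * k - 1 - n : ℕ) : ℚ))

/-- The local polynomial `P_{1-k,n}`. -/
def Ppoly (k n : ℕ) (τ : ℂ) : ℂ :=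
  (rnE k n : ℂ)
  + (-Complex.I) ^ (n + 1) / ((n : ℂ) + 1) * bernPer (n + 1) τ
  + Complex.I ^ (n + 1) / ((2 * k - 1 - n : ℕ) : ℂ) * bernPer (2 * k - 1 - n) τ
  + Complex.I ^ (1 - (n : ℤ)) / 2 *
      ∑' M : {M : SL2Z // 0 < M.1 0 0 * M.1 1 0 ∧ (moeb M τ).re < 0},
        jfac M.1 τ ^ (2 * k - 2) *
          (moeb M.1 τ ^ n - (-1 : ℂ) ^ n * moeb M.1 τ ^ (2 * k - 2 - n))

/-- The binary quadratic form `[a,b,c]` evaluated at complex arguments. -/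
def qfC (a b c : ℤ) (x y : ℂ) : ℂ := (a : ℂ) * x ^ 2 + (b : ℂ) * x * y + (c : ℂ) * y ^ 2

/-- CM point of the positive definite form `[a,b,c]`. -/
def cmPoint (a b c : ℤ) : ℂ :=
  (-(b : ℂ) + Complex.I * ((Real.sqrt (((b ^ 2 - 4 * a * c).natAbs : ℝ))) : ℂ)) / (2 * (a : ℂ))

/-- The form `[a,b,c] ∘ M`. -/
def qfComp (a b c : ℤ) (M : SL2Z) : ℤ × ℤ × ℤ :=
  (a * (M.1 0 0) ^ 2 + b * (M.1 0 0) * (M.1 1 0) + c * (M.1 1 0) ^ 2,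
   2 * a * (M.1 0 0) * (M.1 0 1) + b * ((M.1 0 0) * (M.1 1 1) + (M.1 0 1) * (M.1 1 0)) +
     2 * c * (M.1 1 0) * (M.1 1 1),
   a * (M.1 0 1) ^ 2 + b * (M.1 0 1) * (M.1 1 1) + c * (M.1 1 1) ^ 2)

/-- `w_P`: order of the stabilizer of `P = [a,b,c]` in `PSL₂(ℤ)` (half the order of the
stabilizer in `SL₂(ℤ)`, which contains `±1`). -/
def wP (a b c : ℤ) : ℕ := Nat.card {M : SL2Z // qfComp a b c M = (a, b, c)} / 2

/-- The meromorphic modular form `f_{k,P}` for `P = [a,b,c]`. -/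
def fkP (k : ℕ) (a b c : ℤ) (z : ℂ) : ℂ :=
  (((((b ^ 2 - 4 * a * c).natAbs : ℝ)) ^ ((k : ℝ) - 1 / 2) : ℝ) : ℂ) /
      (2 * (π : ℂ) * (wP a b c : ℂ)) *
    ∑' M : SL2Z, (qfC a b c ((M.1 0 0 : ℂ) * z + (M.1 0 1 : ℂ))
      ((M.1 1 0 : ℂ) * z + (M.1 1 1 : ℂ))) ^ (-(k : ℤ))

/-- The `n`-th period `r_n(f) = ∫₀^∞ f(iy) y^n dy`. -/
def periodN (n : ℕ) (f : ℂ → ℂ) : ℂ :=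
  ∫ y in Set.Ioi (0 : ℝ), f ((y : ℂ) * Complex.I) * (y : ℂ) ^ n

/-- Epstein zeta function of `[a,b,c]` at an integer `k`. -/
def epstein (a b c : ℤ) (k : ℕ) : ℝ :=
  ∑' p : {p : ℤ × ℤ // p ≠ (0, 0)},
    ((a * p.1.1 ^ 2 + b * p.1.1 * p.1.2 + c * p.1.2 ^ 2 : ℤ) : ℝ) ^ (-(k : ℤ))

/-- `sgn(M)` for `M = (a,b;c,d)`: `sgn(ac)` if `ac ≠ 0`, else `sgn(bd)`. -/
def sgnM (M : SL2Z) : ℤ :=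
  if M.1 0 0 * M.1 1 0 ≠ 0 then Int.sign (M.1 0 0 * M.1 1 0) else Int.sign (M.1 0 1 * M.1 1 1)

/-- Upper incomplete Gamma function `Γ(s,x)` for a natural number `s`. -/
def GammaUpper (s : ℕ) (x : ℝ) : ℝ := ∫ t in Set.Ioi x, Real.exp (-t) * t ^ (s - 1)

/-- A cusp form of weight `2k` for `SL₂(ℤ)`, as a function on `ℂ` (holomorphic on `ℍ`,
modular of weight `2k`, vanishing at the cusp `i∞`). -/
def IsCuspForm2k (k : ℕ) (f : ℂ → ℂ) : Prop :=
  (∀ τ : ℂ, 0 < τ.im → DifferentiableAt ℂ f τ) ∧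
  (∀ (M : SL2Z) (τ : ℂ), 0 < τ.im → f (moeb M τ) = jfac M τ ^ (2 * k) * f τ) ∧
  Filter.Tendsto f (Filter.comap Complex.im Filter.atTop) (nhds 0)

/-!
Unfolding `f_{k,P}` writes its `n`-th period as a sum over `M` of `∫₀^∞ Q(iy, 1)^{-k} y^n dy` with
`Q = P ∘ M = [A, B, C]`. The condition `Re (M⁻¹τ_P) ≠ 0` says `B ≠ 0`, so the poles of
`w ↦ Q(iw, 1)^{-k} w^n` all lie in one open half-plane bounded by the real axis; closing the
contour in the other half-plane shows that its integral over `ℝ` vanishes. As `w ↦ -w` conjugates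
`Q(iw, 1)` for real `w`, each half-line integral `J` satisfies `J + (-1)^n conj J = 0`, and so
does the sum. Integrating term by term is legitimate because `4AC = B² + |d| ≤ (1 + |d|)B²` makes
`|Q(iy, 1)|` comparable to `C + Ay²`, which bounds the `M`-th integral of absolute values by a
constant times `1 / (AC)`, and the sum of `1 / (AC)` over `SL₂(ℤ)` converges.
-/

open Asymptotics Bornology Filter
open scoped ComplexConjugate Topology

section Contour

variable {E : Type*} [NormedAddCommGroup E] [NormedSpace ℂ E] {f : ℂ → E}

lemma norm_intervalIntegral_le_of_norm_le_on_upperHalfPlane {R ε : ℝ}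
    (hf : DiffContOnCl ℂ f {z | 0 < z.im}) (hR : 0 ≤ R)
    (hbound : ∀ z : ℂ, 0 ≤ z.im → R ≤ ‖z‖ → ‖f z‖ ≤ ε) :
    ‖∫ x in (-R)..R, f x‖ ≤ 4 * ε * R := by
  have hcauchy := integral_boundary_rect_eq_zero_of_continuousOn_of_differentiableOn f
    (-R : ℂ) (R + R * I) (hf.continuousOn.mono fun z hz => ?_) (hf.1.mono fun z hz => ?_)
  · simp only [neg_re, ofReal_re, neg_im, ofReal_im, add_re, mul_re, I_re, mul_zero, I_im,
      mul_one, sub_self, add_zero, add_im, mul_im, zero_add, neg_zero, ofReal_zero, zero_mul,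
      ofReal_neg] at hcauchy
    have htop : ‖∫ x in (-R)..R, f (x + R * I)‖ ≤ ε * |R - -R| :=
      intervalIntegral.norm_integral_le_of_norm_le_const fun x _ =>
        hbound _ (by simpa using hR)
          ((le_abs_self R).trans (by simpa using abs_im_le_norm (x + R * I)))
    have hside (s : ℝ) (hs : |s| = R) : ‖I • ∫ y in (0 : ℝ)..R, f (s + y * I)‖ ≤ ε * |R - 0| := by
      rw [norm_smul, norm_I, one_mul]
      refine intervalIntegral.norm_integral_le_of_norm_le_const fun y hy => ?_
      rw [Set.uIoc_of_le hR] at hy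
      exact hbound _ (by simpa using hy.1.le)
        (hs.ge.trans (by simpa using abs_re_le_norm (s + y * I)))
    have hright := hside R (abs_of_nonneg hR)
    have hleft := hside (-R) (by rw [abs_neg, abs_of_nonneg hR])
    rw [sub_zero, abs_of_nonneg hR] at hright hleft
    rw [sub_neg_eq_add, abs_of_nonneg (by positivity)] at htop
    rw [ofReal_neg] at hleft
    calc ‖∫ x in (-R)..R, f x‖
        = ‖(∫ x in (-R)..R, f (x + R * I)) - (I • ∫ y in (0 : ℝ)..R, f (R + y * I))
            + I • ∫ y in (0 : ℝ)..R, f (-R + y * I)‖ := by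
          congr 1
          rw [← sub_eq_zero, ← hcauchy]
          abel
      _ ≤ ε * (R + R) + ε * R + ε * R :=
          norm_add_le_of_le (norm_sub_le_of_le htop hright) hleft
      _ = 4 * ε * R := by ring
  · rw [closure_setOfPred_lt_im]
    simpa [hR] using hz.2.1
  · simpa [hR] using hz.2.1

theorem integral_ofReal_eq_zero_of_diffContOnCl_upperHalfPlane
    (hf : DiffContOnCl ℂ f {z | 0 < z.im})
    (hdecay : f =o[cobounded ℂ ⊓ 𝓟 {z | 0 ≤ z.im}] fun z => z⁻¹)
    (hint : Integrable fun x : ℝ => f x) : ∫ x : ℝ, f x = 0 := by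
  have hlim := intervalIntegral_tendsto_integral hint tendsto_neg_atTop_atBot tendsto_id
  refine tendsto_nhds_unique hlim (Metric.tendsto_nhds.2 fun ε hε => ?_)
  have hsmall := hdecay.bound (c := ε / 5) (by positivity)
  rw [eventually_inf_principal, hasBasis_cobounded_norm.eventually_iff] at hsmall
  obtain ⟨r, -, hr⟩ := hsmall
  filter_upwards [eventually_ge_atTop r, eventually_gt_atTop 0] with R hrR hR
  have harc : ∀ z : ℂ, 0 ≤ z.im → R ≤ ‖z‖ → ‖f z‖ ≤ ε / 5 * R⁻¹ := fun z hz hRz =>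
    (hr (hrR.trans hRz) hz).trans (by rw [norm_inv]; gcongr)
  rw [dist_zero_right]
  calc ‖∫ x in (-R)..R, f x‖ ≤ 4 * (ε / 5 * R⁻¹) * R :=
        norm_intervalIntegral_le_of_norm_le_on_upperHalfPlane hf hR.le harc
    _ = 4 / 5 * ε := by field_simp
    _ < ε := by linarith

end Contour

theorem integral_eq_integral_Ioi_add_integral_Ioi_comp_neg {E : Type*} [NormedAddCommGroup E]
    [NormedSpace ℝ E] {f : ℝ → E} (hf : Integrable f) :
    ∫ x, f x = (∫ x in Set.Ioi 0, f x) + ∫ x in Set.Ioi 0, f (-x) := by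
  rw [integral_comp_neg_Ioi, neg_zero, add_comm,
    intervalIntegral.integral_Iic_add_Ioi hf.integrableOn hf.integrableOn]

theorem isLittleO_inv_sq_inv_cobounded {𝕜 : Type*} [NormedDivisionRing 𝕜] :
    (fun z : 𝕜 => (z ^ 2)⁻¹) =o[cobounded 𝕜] fun z => z⁻¹ := by
  simpa only [pow_two, mul_inv_rev, one_mul] using
    ((isLittleO_one_iff 𝕜).2 tendsto_inv₀_cobounded).mul_isBigO
      (isBigO_refl (fun z : 𝕜 => z⁻¹) (cobounded 𝕜))

section QuadraticPeriods

variable {k n : ℕ} {A B C : ℝ}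

/-- The dehomogenized quadratic form `Q(z, 1)` of `Q = [A, B, C]`, with real coefficients. -/
def dehomogenize (A B C : ℝ) (z : ℂ) : ℂ := A * z ^ 2 + B * z + C

lemma conj_dehomogenize (A B C : ℝ) (z : ℂ) :
    conj (dehomogenize A B C z) = dehomogenize A B C (conj z) := by
  simp [dehomogenize]

lemma dehomogenize_neg (A B C : ℝ) (z : ℂ) :
    dehomogenize A B C (-z) = dehomogenize A (-B) C z := by
  simp [dehomogenize]

lemma dehomogenize_ne_zero (hA : 0 < A) (hB : B ≠ 0) (hC : 0 < C) {z : ℂ}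
    (hz : 0 ≤ B * z.re) : dehomogenize A B C z ≠ 0 := by
  intro hzero
  have hre : A * (z.re ^ 2 - z.im ^ 2) + B * z.re + C = 0 := by
    simpa [dehomogenize, pow_two] using congrArg re hzero
  have him : z.im * (2 * A * z.re + B) = 0 := by
    have := congrArg im hzero
    simp only [dehomogenize, pow_two, add_im, mul_im, ofReal_re, ofReal_im, mul_re,
      zero_im] at this
    linear_combination this
  have hfactor : 2 * A * z.re + B ≠ 0 := by
    intro h
    have : 0 < B * (2 * A * z.re + B) := by
      calc 0 < 2 * A * (B * z.re) + B ^ 2 := by positivity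
        _ = B * (2 * A * z.re + B) := by ring
    simp [h] at this
  have : z.im = 0 := (mul_eq_zero.1 him).resolve_right hfactor
  have hpos : 0 < A * z.re ^ 2 + B * z.re + C := by positivity
  exact hpos.ne' (by simpa [this] using hre)

/-- The integrand `Q(iy, 1)^{-k} y^n` of the `n`-th period of `z ↦ Q(z, 1)^{-k}`, extended to
complex `y` so that the contour of integration can be moved. -/
def periodIntegrand (k n : ℕ) (A B C : ℝ) (w : ℂ) : ℂ :=
  dehomogenize A B C (w * I) ^ (-(k : ℤ)) * w ^ n

lemma periodIntegrand_neg (k n : ℕ) (A B C : ℝ) (w : ℂ) :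
    periodIntegrand k n A B C (-w) = (-1) ^ n * periodIntegrand k n A (-B) C w := by
  rw [periodIntegrand, neg_mul, dehomogenize_neg, neg_pow, periodIntegrand]
  ring

lemma periodIntegrand_neg_ofReal (k n : ℕ) (A B C y : ℝ) :
    periodIntegrand k n A B C (-y) = (-1) ^ n * conj (periodIntegrand k n A B C y) := by
  rw [periodIntegrand, periodIntegrand, neg_pow, map_mul, map_pow, map_zpow₀, conj_dehomogenize,
    map_mul, conj_ofReal, conj_I, neg_mul, mul_neg]
  ring

lemma differentiableAt_periodIntegrand (k n : ℕ) (hA : 0 < A) (hB : B ≠ 0) (hC : 0 < C) {w : ℂ}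
    (hw : B * w.im ≤ 0) : DifferentiableAt ℂ (periodIntegrand k n A B C) w := by
  have hne : dehomogenize A B C (w * I) ≠ 0 := dehomogenize_ne_zero hA hB hC (by simpa using hw)
  refine DifferentiableAt.mul (DifferentiableAt.zpow ?_ (Or.inl hne)) (by fun_prop)
  unfold dehomogenize
  fun_prop

lemma continuous_periodIntegrand_ofReal (k n : ℕ) (hA : 0 < A) (hB : B ≠ 0) (hC : 0 < C) :
    Continuous fun y : ℝ => periodIntegrand k n A B C y :=
  continuous_iff_continuousAt.2 fun y =>
    (differentiableAt_periodIntegrand k n hA hB hC (by simp)).continuousAt.comp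
      continuous_ofReal.continuousAt

lemma isEquivalent_dehomogenize_mul_I (hA : A ≠ 0) (B C : ℝ) :
    (fun w => dehomogenize A B C (w * I)) ~[cobounded ℂ] fun w => -A * w ^ 2 := by
  refine isEquivalent_of_tendsto_one ?_
  have hlim : Tendsto (fun w : ℂ => 1 - B * I / A * w⁻¹ - C / A * w⁻¹ ^ 2) (cobounded ℂ)
      (𝓝 (1 - B * I / A * 0 - C / A * 0 ^ 2)) := by
    have := tendsto_inv₀_cobounded (α := ℂ)
    exact (tendsto_const_nhds.sub (this.const_mul _)).sub ((this.pow 2).const_mul _)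
  simp only [mul_zero, sub_zero, ne_eq, OfNat.ofNat_ne_zero, not_false_eq_true, zero_pow] at hlim
  refine hlim.congr' ?_
  filter_upwards [eventually_ne_cobounded 0] with w hw
  have hA' : (A : ℂ) ≠ 0 := ofReal_ne_zero.2 hA
  simp only [dehomogenize, mul_pow, I_sq, Pi.div_apply]
  field_simp
  ring

lemma isBigO_periodIntegrand (hn : n + 1 < 2 * k) (hA : A ≠ 0) (B C : ℝ) :
    periodIntegrand k n A B C =O[cobounded ℂ] fun w => (w ^ 2)⁻¹ := by
  have hquad : (fun w => dehomogenize A B C (w * I) ^ (-(k : ℤ)))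
      =O[cobounded ℂ] fun w => ((w ^ 2) ^ k)⁻¹ := by
    simp only [zpow_neg, zpow_natCast]
    have hlead : (fun w : ℂ => ((-A * w ^ 2) ^ k)⁻¹) =O[cobounded ℂ] fun w => ((w ^ 2) ^ k)⁻¹ := by
      simp only [mul_pow, mul_inv]
      exact isBigO_const_mul_self _ _ _
    exact ((isEquivalent_dehomogenize_mul_I hA B C).pow k).inv.isBigO.trans hlead
  refine (hquad.mul (isBigO_refl (fun w => w ^ n) _)).trans (IsBigO.of_bound 1 ?_)
  filter_upwards [hasBasis_cobounded_norm.mem_of_mem (i := 1) trivial] with w hw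
  have : 0 < ‖w‖ := zero_lt_one.trans_le hw
  rw [one_mul, norm_mul, norm_inv, norm_inv, norm_pow, norm_pow, norm_pow,
    inv_mul_le_iff₀ (by positivity), ← div_eq_mul_inv, le_div_iff₀ (by positivity),
    ← pow_mul, ← pow_add]
  exact pow_le_pow_right₀ hw (by omega)

lemma integrable_periodIntegrand (hn : n + 1 < 2 * k) (hA : 0 < A) (hB : B ≠ 0) (hC : 0 < C) :
    Integrable fun y : ℝ => periodIntegrand k n A B C y := by
  refine (continuous_periodIntegrand_ofReal k n hA hB hC).locallyIntegrable
    |>.integrable_of_isBigO_cocompact (g := fun y : ℝ => (1 + y ^ 2)⁻¹) ?_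
      (integrable_inv_one_add_sq.integrableAtFilter _)
  rw [← Metric.cobounded_eq_cocompact]
  refine ((isBigO_periodIntegrand hn hA.ne' B C).comp_tendsto
    (RCLike.tendsto_ofReal_cobounded_cobounded ℂ)).trans (IsBigO.of_bound 2 ?_)
  filter_upwards [hasBasis_cobounded_norm.mem_of_mem (i := 1) trivial] with y hy
  have hy1 : 1 ≤ y ^ 2 := (one_le_sq_iff_one_le_abs y).2 hy
  simp only [Function.comp, RCLike.ofReal_eq_complex_ofReal, norm_inv, norm_pow, norm_real,
    Real.norm_eq_abs, sq_abs]
  rw [abs_of_pos (by positivity), ← div_eq_mul_inv, inv_eq_one_div,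
    div_le_div_iff₀ (by positivity) (by positivity)]
  linarith

-- The poles of the integrand lie in the half-plane `B * im w > 0`, so the contour closes in the
-- opposite one.
lemma integral_periodIntegrand_eq_zero (hn : n + 1 < 2 * k) (hA : 0 < A) (hB : B ≠ 0)
    (hC : 0 < C) : ∫ y : ℝ, periodIntegrand k n A B C y = 0 := by
  wlog hneg : B < 0 generalizing B
  · have hflip := this (neg_ne_zero.2 hB) (neg_lt_zero.2 (hB.lt_of_le' (not_lt.1 hneg)))
    rw [← integral_neg_eq_self]
    simp only [ofReal_neg, periodIntegrand_neg]
    rw [integral_const_mul, hflip, mul_zero]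
  refine integral_ofReal_eq_zero_of_diffContOnCl_upperHalfPlane ?_ ?_
    (integrable_periodIntegrand hn hA hB hC)
  · refine DifferentiableOn.diffContOnCl fun w hw => ?_
    rw [closure_setOfPred_lt_im] at hw
    exact (differentiableAt_periodIntegrand k n hA hB hC
      (mul_nonpos_of_nonpos_of_nonneg hneg.le hw)).differentiableWithinAt
  · exact ((isBigO_periodIntegrand hn hA.ne' B C).trans_isLittleO
      isLittleO_inv_sq_inv_cobounded).mono inf_le_left

theorem conj_integral_Ioi_periodIntegrand (hn : n + 1 < 2 * k) (hA : 0 < A) (hB : B ≠ 0)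
    (hC : 0 < C) :
    conj (∫ y in Set.Ioi (0 : ℝ), periodIntegrand k n A B C y) =
      (-1) ^ (n + 1) * ∫ y in Set.Ioi (0 : ℝ), periodIntegrand k n A B C y := by
  have hsplit := integral_eq_integral_Ioi_add_integral_Ioi_comp_neg
    (integrable_periodIntegrand hn hA hB hC)
  simp only [ofReal_neg, periodIntegrand_neg_ofReal] at hsplit
  rw [integral_periodIntegrand_eq_zero hn hA hB hC, integral_const_mul, integral_conj] at hsplit
  have hsign : (-1 : ℂ) ^ n * (-1) ^ n = 1 := by rw [← mul_pow]; simp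
  linear_combination (-1 : ℂ) ^ (n + 1) * hsplit -
    conj (∫ y in Set.Ioi (0 : ℝ), periodIntegrand k n A B C y) * hsign

end QuadraticPeriods

section PeriodBound

variable {k n : ℕ} {A B C K : ℝ}

lemma le_mul_norm_dehomogenize_mul_I (hK : 1 ≤ K) (hAC : 4 * A * C ≤ (K * B) ^ 2) (y : ℝ) :
    C + A * y ^ 2 ≤ K * ‖dehomogenize A B C (y * I)‖ := by
  have hnorm : ‖dehomogenize A B C (y * I)‖ ^ 2 = (C - A * y ^ 2) ^ 2 + (B * y) ^ 2 := by
    rw [Complex.sq_norm, normSq_apply]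
    simp [dehomogenize, mul_pow, ← ofReal_pow]
    ring
  refine le_of_sq_le_sq ?_ (by positivity)
  calc (C + A * y ^ 2) ^ 2 = (C - A * y ^ 2) ^ 2 + 4 * A * C * y ^ 2 := by ring
    _ ≤ K ^ 2 * (C - A * y ^ 2) ^ 2 + (K * B) ^ 2 * y ^ 2 := by
        gcongr
        exact le_mul_of_one_le_left (sq_nonneg _) (one_le_pow₀ hK)
    _ = (K * ‖dehomogenize A B C (y * I)‖) ^ 2 := by rw [mul_pow K ‖_‖, hnorm]; ring

lemma pow_div_pow_le {X y : ℝ} (hn : 0 < n) (hnk : n < 2 * k - 2) (hy : 0 ≤ y)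
    (hX : 1 + y ^ 2 ≤ X) : y ^ n / X ^ k ≤ y / X ^ 2 := by
  obtain ⟨m, rfl⟩ : ∃ m, n = m + 1 := ⟨n - 1, by omega⟩
  obtain ⟨l, rfl⟩ : ∃ l, k = l + 2 := ⟨k - 2, by omega⟩
  have hX0 : 0 < X := by linarith [sq_nonneg y]
  have hyX : y ^ m ≤ X ^ l := by
    rcases le_total y 1 with h | h
    · exact (pow_le_one₀ hy h).trans (one_le_pow₀ (by linarith [sq_nonneg y]))
    · calc y ^ m ≤ y ^ (2 * l) := pow_le_pow_right₀ h (by omega)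
        _ = (y ^ 2) ^ l := pow_mul _ _ _
        _ ≤ X ^ l := by gcongr; linarith
  calc y ^ (m + 1) / X ^ (l + 2) = y ^ m / X ^ l * (y / X ^ 2) := by
        rw [pow_succ, pow_add, mul_div_mul_comm]
    _ ≤ y / X ^ 2 := mul_le_of_le_one_left (by positivity) (div_le_one_of_le₀ hyX (by positivity))

lemma norm_periodIntegrand_le (hn : 0 < n) (hnk : n < 2 * k - 2) (hA : 1 ≤ A) (hC : 1 ≤ C)
    (hK : 1 ≤ K) (hAC : 4 * A * C ≤ (K * B) ^ 2) {y : ℝ} (hy : 0 ≤ y) :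
    ‖periodIntegrand k n A B C y‖ ≤ K ^ k * (y / (C + A * y ^ 2) ^ 2) := by
  have hX : 1 + y ^ 2 ≤ C + A * y ^ 2 :=
    add_le_add hC (le_mul_of_one_le_left (sq_nonneg y) hA)
  have hle := le_mul_norm_dehomogenize_mul_I hK hAC y
  have : 0 < C + A * y ^ 2 := by positivity
  calc ‖periodIntegrand k n A B C y‖
      = K ^ k * (y ^ n / (K * ‖dehomogenize A B C (y * I)‖) ^ k) := by
        rw [periodIntegrand, norm_mul, norm_zpow, norm_pow, norm_real, Real.norm_of_nonneg hy,
          zpow_neg, zpow_natCast, mul_pow]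
        field_simp
    _ ≤ K ^ k * (y ^ n / (C + A * y ^ 2) ^ k) := by gcongr
    _ ≤ K ^ k * (y / (C + A * y ^ 2) ^ 2) :=
        mul_le_mul_of_nonneg_left (pow_div_pow_le hn hnk hy hX) (by positivity)

lemma hasDerivAt_inv_add_mul_sq (hA : 0 < A) (hC : 0 < C) (y : ℝ) :
    HasDerivAt (fun y => -(2 * A)⁻¹ * (C + A * y ^ 2)⁻¹) (y / (C + A * y ^ 2) ^ 2) y := by
  have hne : C + A * y ^ 2 ≠ 0 := by positivity
  have hquad : HasDerivAt (fun y => C + A * y ^ 2) (A * (2 * y)) y := by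
    simpa using ((hasDerivAt_pow 2 y).const_mul A).const_add C
  refine ((hquad.inv hne).const_mul (-(2 * A)⁻¹)).congr_deriv ?_
  field_simp

lemma tendsto_inv_add_mul_sq_atTop (hA : 0 < A) (C : ℝ) :
    Tendsto (fun y => -(2 * A)⁻¹ * (C + A * y ^ 2)⁻¹) atTop (𝓝 0) := by
  rw [← mul_zero (-(2 * A)⁻¹)]
  exact (tendsto_inv_atTop_zero.comp (tendsto_atTop_add_const_left _ C
    ((tendsto_pow_atTop two_ne_zero).const_mul_atTop hA))).const_mul _

lemma integrableOn_div_add_mul_sq_sq (hA : 0 < A) (hC : 0 < C) :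
    IntegrableOn (fun y => y / (C + A * y ^ 2) ^ 2) (Set.Ioi 0) :=
  integrableOn_Ioi_deriv_of_nonneg' (fun y _ => hasDerivAt_inv_add_mul_sq hA hC y)
    (fun _ hy => div_nonneg (le_of_lt hy) (sq_nonneg _)) (tendsto_inv_add_mul_sq_atTop hA C)

lemma integral_Ioi_div_add_mul_sq_sq (hA : 0 < A) (hC : 0 < C) :
    ∫ y in Set.Ioi 0, y / (C + A * y ^ 2) ^ 2 = (2 * (A * C))⁻¹ := by
  rw [integral_Ioi_of_hasDerivAt_of_nonneg' (fun y _ => hasDerivAt_inv_add_mul_sq hA hC y)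
    (fun _ hy => div_nonneg (le_of_lt hy) (sq_nonneg _)) (tendsto_inv_add_mul_sq_atTop hA C)]
  simp [mul_comm, mul_left_comm, mul_assoc]

theorem integral_norm_periodIntegrand_le (hn : 0 < n) (hnk : n < 2 * k - 2) (hA : 1 ≤ A)
    (hC : 1 ≤ C) (hK : 1 ≤ K) (hAC : 4 * A * C ≤ (K * B) ^ 2) :
    ∫ y in Set.Ioi (0 : ℝ), ‖periodIntegrand k n A B C y‖ ≤ K ^ k / 2 * (A * C)⁻¹ := by
  have hA0 : 0 < A := by positivity
  have hC0 : 0 < C := by positivity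
  rw [div_eq_mul_inv, mul_assoc, ← mul_inv, ← integral_Ioi_div_add_mul_sq_sq hA0 hC0,
    ← integral_const_mul]
  refine integral_mono_of_nonneg (ae_of_all _ fun _ => norm_nonneg _)
    ((integrableOn_div_add_mul_sq_sq hA0 hC0).const_mul _) ?_
  filter_upwards [self_mem_ae_restrict measurableSet_Ioi] with y hy
  exact norm_periodIntegrand_le hn hnk hA hC hK hAC (le_of_lt hy)

end PeriodBound

section ColumnReduction

theorem summable_inv_one_add_intCast_sq : Summable fun m : ℤ => (1 + (m : ℝ) ^ 2)⁻¹ := by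
  have hsq := (Real.summable_one_div_int_pow (p := 2)).2 one_lt_two
  refine hsq.of_norm_bounded_eventually ?_
  filter_upwards [(Set.finite_singleton (0 : ℤ)).compl_mem_cofinite] with m hm
  have : (m : ℝ) ≠ 0 := by simpa using hm
  rw [Real.norm_of_nonneg (by positivity), one_div]
  gcongr
  linarith

lemma summable_inv_mul_one_add_intCast_sq :
    Summable fun p : ℤ × ℤ × ℤ =>
      ((1 + (p.1 : ℝ) ^ 2) * ((1 + (p.2.1 : ℝ) ^ 2) * (1 + (p.2.2 : ℝ) ^ 2)))⁻¹ := by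
  have hnonneg : (0 : ℤ → ℝ) ≤ fun m : ℤ => (1 + (m : ℝ) ^ 2)⁻¹ := fun m => by
    rw [Pi.zero_apply]
    positivity
  have hsum := summable_inv_one_add_intCast_sq
  simpa only [mul_inv] using hsum.mul_of_nonneg (hsum.mul_of_nonneg hsum hnonneg hnonneg) hnonneg
    fun p => mul_nonneg (hnonneg p.1) (hnonneg p.2)

lemma det_eq_one (M : SL2Z) : M.1 0 0 * M.1 1 1 - M.1 0 1 * M.1 1 0 = 1 := by
  rw [← Matrix.det_fin_two, M.2]

lemma col_sq_add_sq_pos (M : SL2Z) (j : Fin 2) : 0 < M.1 0 j ^ 2 + M.1 1 j ^ 2 :=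
  (add_nonneg (sq_nonneg _) (sq_nonneg _)).lt_of_ne' (M.isCoprime_col j).sq_add_sq_ne_zero

/-- The second column `v` of `M = (u | v)` together with the integer part of `⟨u, v⟩ / |v|²`.
These determine `M`, because `det M = 1` fixes `u` up to adding integer multiples of `v`. -/
def columnReduction (M : SL2Z) : ℤ × ℤ × ℤ :=
  (M.1 0 1, M.1 1 1,
    (M.1 0 0 * M.1 0 1 + M.1 1 0 * M.1 1 1) / (M.1 0 1 ^ 2 + M.1 1 1 ^ 2))

theorem columnReduction_injective : Function.Injective columnReduction := by
  intro M N h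
  simp only [columnReduction, Prod.mk.injEq] at h
  obtain ⟨h01, h11, hquot⟩ := h
  have hM := det_eq_one M
  have hN := det_eq_one N
  rw [h01, h11] at hM hquot
  set j := N.1 0 0 * M.1 1 0 - M.1 0 0 * N.1 1 0 with hj
  have h00 : M.1 0 0 = N.1 0 0 + j * N.1 0 1 := by
    linear_combination N.1 0 0 * hM - M.1 0 0 * hN + N.1 0 1 * hj
  have h10 : M.1 1 0 = N.1 1 0 + j * N.1 1 1 := by
    linear_combination N.1 1 0 * hM - M.1 1 0 * hN + N.1 1 1 * hj
  have hinner : M.1 0 0 * N.1 0 1 + M.1 1 0 * N.1 1 1 =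
      N.1 0 0 * N.1 0 1 + N.1 1 0 * N.1 1 1 + j * (N.1 0 1 ^ 2 + N.1 1 1 ^ 2) := by
    rw [h00, h10]
    ring
  rw [hinner, Int.add_mul_ediv_right _ _ (col_sq_add_sq_pos N 1).ne', add_eq_left] at hquot
  rw [hquot, zero_mul, add_zero] at h00 h10
  ext i j
  fin_cases i <;> fin_cases j <;> assumption

lemma one_add_ediv_sq_mul_sq_le {m q : ℤ} (hq : 0 < q) (hqm : q ^ 2 ≤ 1 + m ^ 2) :
    (1 + (m / q) ^ 2) * q ^ 2 ≤ 5 * (1 + m ^ 2) := by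
  have hrem : (m % q) ^ 2 ≤ q ^ 2 :=
    pow_le_pow_left₀ (Int.emod_nonneg m hq.ne') (Int.emod_lt_of_pos m hq).le 2
  calc (1 + (m / q) ^ 2) * q ^ 2 = q ^ 2 + (m - m % q) ^ 2 := by
        linear_combination (q * (m / q) + m - m % q) * Int.mul_ediv_add_emod m q
    _ ≤ q ^ 2 + 2 * (m ^ 2 + (m % q) ^ 2) := by
        linarith [sq_nonneg (m + m % q)]
    _ ≤ 5 * (1 + m ^ 2) := by linarith

lemma mul_one_add_sq_columnReduction_le {M : SL2Z}
    (h : M.1 0 1 ^ 2 + M.1 1 1 ^ 2 ≤ M.1 0 0 ^ 2 + M.1 1 0 ^ 2) :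
    (1 + (columnReduction M).1 ^ 2) *
        ((1 + (columnReduction M).2.1 ^ 2) * (1 + (columnReduction M).2.2 ^ 2)) ≤
      15 * ((M.1 0 0 ^ 2 + M.1 1 0 ^ 2) * (M.1 0 1 ^ 2 + M.1 1 1 ^ 2)) := by
  have hdet := det_eq_one M
  have hq := col_sq_add_sq_pos M 1
  rw [columnReduction]
  set q := M.1 0 1 ^ 2 + M.1 1 1 ^ 2
  set m := M.1 0 0 * M.1 0 1 + M.1 1 0 * M.1 1 1
  have hlagrange : (M.1 0 0 ^ 2 + M.1 1 0 ^ 2) * q = 1 + m ^ 2 := by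
    linear_combination (M.1 0 0 * M.1 1 1 - M.1 0 1 * M.1 1 0 + 1) * hdet
  have hqm : q ^ 2 ≤ 1 + m ^ 2 := by
    rw [← hlagrange, pow_two]
    gcongr
  have hcol : (1 + M.1 0 1 ^ 2) * (1 + M.1 1 1 ^ 2) ≤ 3 * q ^ 2 := by
    nlinarith [sq_nonneg (M.1 0 1), sq_nonneg (M.1 1 1), sq_nonneg (M.1 0 1 ^ 2 - M.1 1 1 ^ 2)]
  calc (1 + M.1 0 1 ^ 2) * ((1 + M.1 1 1 ^ 2) * (1 + (m / q) ^ 2))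
      = (1 + M.1 0 1 ^ 2) * (1 + M.1 1 1 ^ 2) * (1 + (m / q) ^ 2) := by ring
    _ ≤ 3 * q ^ 2 * (1 + (m / q) ^ 2) := by gcongr
    _ = 3 * ((1 + (m / q) ^ 2) * q ^ 2) := by ring
    _ ≤ 3 * (5 * (1 + m ^ 2)) :=
        mul_le_mul_of_nonneg_left (one_add_ediv_sq_mul_sq_le hq hqm) zero_le_three
    _ = 15 * ((M.1 0 0 ^ 2 + M.1 1 0 ^ 2) * q) := by rw [hlagrange]; ring

lemma inv_col_sq_add_sq_le {M : SL2Z}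
    (h : M.1 0 1 ^ 2 + M.1 1 1 ^ 2 ≤ M.1 0 0 ^ 2 + M.1 1 0 ^ 2) :
    (((M.1 0 0 : ℝ) ^ 2 + (M.1 1 0 : ℝ) ^ 2) * ((M.1 0 1 : ℝ) ^ 2 + (M.1 1 1 : ℝ) ^ 2))⁻¹ ≤
      15 * ((1 + ((columnReduction M).1 : ℝ) ^ 2) *
        ((1 + ((columnReduction M).2.1 : ℝ) ^ 2) * (1 + ((columnReduction M).2.2 : ℝ) ^ 2)))⁻¹ := by
  rw [← div_eq_mul_inv, le_div_iff₀ (by positivity), inv_mul_le_iff₀, mul_comm _ (15 : ℝ)]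
  · exact_mod_cast mul_one_add_sq_columnReduction_le h
  · exact_mod_cast mul_pos (col_sq_add_sq_pos M 0) (col_sq_add_sq_pos M 1)

lemma mul_S_apply_zero (M : SL2Z) (i : Fin 2) : (M * ModularGroup.S).1 i 0 = M.1 i 1 := by
  simp [Matrix.SpecialLinearGroup.coe_mul, ModularGroup.coe_S, Matrix.mul_apply]

lemma mul_S_apply_one (M : SL2Z) (i : Fin 2) : (M * ModularGroup.S).1 i 1 = -M.1 i 0 := by
  simp [Matrix.SpecialLinearGroup.coe_mul, ModularGroup.coe_S, Matrix.mul_apply]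

-- `inv_col_sq_add_sq_le` needs the second column to be the shorter one; right multiplication by
-- `S` swaps the two columns up to sign.
theorem summable_inv_col_sq_add_sq :
    Summable fun M : SL2Z => (((M.1 0 0 : ℝ) ^ 2 + (M.1 1 0 : ℝ) ^ 2) *
      ((M.1 0 1 : ℝ) ^ 2 + (M.1 1 1 : ℝ) ^ 2))⁻¹ := by
  have hsum := (summable_inv_mul_one_add_intCast_sq.comp_injective
    columnReduction_injective).mul_left 15
  have hsumS := hsum.comp_injective (mul_left_injective ModularGroup.S)
  refine Summable.of_nonneg_of_le (fun M => by positivity) (fun M => ?_) (hsum.add hsumS)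
  rcases le_total (M.1 0 1 ^ 2 + M.1 1 1 ^ 2) (M.1 0 0 ^ 2 + M.1 1 0 ^ 2) with h | h
  · refine (inv_col_sq_add_sq_le h).trans (le_add_of_nonneg_right ?_)
    simp only [Function.comp_apply]
    positivity
  · have hS := inv_col_sq_add_sq_le (M := M * ModularGroup.S)
      (by simpa only [mul_S_apply_zero, mul_S_apply_one, neg_sq] using h)
    rw [mul_comm] at hS
    simp only [mul_S_apply_zero, mul_S_apply_one, Int.cast_neg, neg_sq] at hS
    refine hS.trans (le_add_of_nonneg_left ?_)
    simp only [Function.comp_apply]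
    positivity

end ColumnReduction

section DefiniteForms

section OrderedRing

variable {R : Type*} [CommRing R] [LinearOrder R] [IsStrictOrderedRing R] {a b c x y : R}

lemma neg_discr_mul_sq_add_sq_le (a b c x y : R) :
    (4 * a * c - b ^ 2) * (x ^ 2 + y ^ 2) ≤
      4 * (a + c) * (a * x ^ 2 + b * x * y + c * y ^ 2) := by
  linarith [sq_nonneg (2 * a * x + b * y), sq_nonneg (b * x + 2 * c * y)]

lemma trailing_pos_of_discr_neg (ha : 0 < a) (hd : b ^ 2 - 4 * a * c < 0) : 0 < c :=
  pos_of_mul_pos_right (a := 4 * a) (by linarith [sq_nonneg b]) (by positivity)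

lemma quadForm_pos (ha : 0 < a) (hd : b ^ 2 - 4 * a * c < 0) (hxy : 0 < x ^ 2 + y ^ 2) :
    0 < a * x ^ 2 + b * x * y + c * y ^ 2 := by
  have hc := trailing_pos_of_discr_neg ha hd
  have hdiscr : 0 < 4 * a * c - b ^ 2 := by linarith
  exact pos_of_mul_pos_right ((mul_pos hdiscr hxy).trans_le (neg_discr_mul_sq_add_sq_le a b c x y))
    (by positivity)

end OrderedRing

variable {a b c : ℤ}

lemma discr_qfComp (a b c : ℤ) (M : SL2Z) :
    (qfComp a b c M).2.1 ^ 2 - 4 * (qfComp a b c M).1 * (qfComp a b c M).2.2 =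
      b ^ 2 - 4 * a * c := by
  rw [qfComp]
  linear_combination (b ^ 2 - 4 * a * c) *
    (M.1 0 0 * M.1 1 1 - M.1 0 1 * M.1 1 0 + 1) * det_eq_one M

lemma qfComp_leading_pos (ha : 0 < a) (hd : b ^ 2 - 4 * a * c < 0) (M : SL2Z) :
    0 < (qfComp a b c M).1 :=
  quadForm_pos ha hd (col_sq_add_sq_pos M 0)

lemma qfComp_trailing_pos (ha : 0 < a) (hd : b ^ 2 - 4 * a * c < 0) (M : SL2Z) :
    0 < (qfComp a b c M).2.2 :=
  quadForm_pos ha hd (col_sq_add_sq_pos M 1)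

theorem summable_inv_qfComp (ha : 0 < a) (hd : b ^ 2 - 4 * a * c < 0) :
    Summable fun M : SL2Z => (((qfComp a b c M).1 : ℝ) * ((qfComp a b c M).2.2 : ℝ))⁻¹ := by
  have hD : (0 : ℝ) < 4 * a * c - b ^ 2 := by exact_mod_cast (by linarith : 0 < 4 * a * c - b ^ 2)
  set κ : ℝ := 4 * (a + c) / (4 * a * c - b ^ 2) with hκ
  have hform (x y : ℤ) : (x : ℝ) ^ 2 + (y : ℝ) ^ 2 ≤
      κ * ((a * x ^ 2 + b * x * y + c * y ^ 2 : ℤ) : ℝ) := by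
    rw [hκ, div_mul_eq_mul_div, le_div_iff₀' hD]
    exact_mod_cast neg_discr_mul_sq_add_sq_le a b c x y
  have hκ0 : 0 ≤ κ := by
    have : (0 : ℝ) < c := by exact_mod_cast trailing_pos_of_discr_neg ha hd
    positivity
  have hA (M : SL2Z) : (0 : ℝ) < (qfComp a b c M).1 := by
    exact_mod_cast qfComp_leading_pos ha hd M
  have hC (M : SL2Z) : (0 : ℝ) < (qfComp a b c M).2.2 := by
    exact_mod_cast qfComp_trailing_pos ha hd M
  have hcol (M : SL2Z) (j : Fin 2) : (0 : ℝ) < (M.1 0 j : ℝ) ^ 2 + (M.1 1 j : ℝ) ^ 2 := by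
    exact_mod_cast col_sq_add_sq_pos M j
  refine (summable_inv_col_sq_add_sq.mul_left (κ ^ 2)).of_nonneg_of_le
    (fun M => (inv_pos.2 (mul_pos (hA M) (hC M))).le) fun M => ?_
  rw [inv_le_iff_one_le_mul₀ (mul_pos (hA M) (hC M)), mul_right_comm, ← div_eq_mul_inv,
    one_le_div (mul_pos (hcol M 0) (hcol M 1))]
  calc _ ≤ κ * (qfComp a b c M).1 * (κ * (qfComp a b c M).2.2) :=
        mul_le_mul (hform _ _) (hform _ _) (hcol M 1).le (mul_nonneg hκ0 (hA M).le)
    _ = κ ^ 2 * ((qfComp a b c M).1 * (qfComp a b c M).2.2) := by ring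

lemma cmPoint_re (a b c : ℤ) : (cmPoint a b c).re = -b / (2 * a) := by
  rw [cmPoint, ← ofReal_intCast a, ← ofReal_ofNat 2, ← ofReal_mul, div_ofReal_re]
  simp

lemma cmPoint_im (a b c : ℤ) :
    (cmPoint a b c).im = √((b ^ 2 - 4 * a * c).natAbs : ℝ) / (2 * a) := by
  rw [cmPoint, ← ofReal_intCast a, ← ofReal_ofNat 2, ← ofReal_mul, div_ofReal_im]
  simp

lemma normSq_cmPoint (ha : a ≠ 0) (hd : b ^ 2 - 4 * a * c < 0) :
    normSq (cmPoint a b c) = c / a := by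
  have hsqrt : √((b ^ 2 - 4 * a * c).natAbs : ℝ) ^ 2 = 4 * a * c - b ^ 2 := by
    rw [Real.sq_sqrt (Nat.cast_nonneg _), Nat.cast_natAbs, abs_of_neg hd]
    push_cast
    ring
  have : (a : ℝ) ≠ 0 := Int.cast_ne_zero.2 ha
  rw [normSq_apply, cmPoint_re, cmPoint_im]
  field_simp
  linear_combination hsqrt

lemma re_moeb (M : SL2Z) (τ : ℂ) :
    (moeb M τ).re = (M.1 0 0 * M.1 1 0 * normSq τ +
      (M.1 0 0 * M.1 1 1 + M.1 0 1 * M.1 1 0) * τ.re + M.1 0 1 * M.1 1 1) /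
        normSq (jfac M τ) := by
  rw [moeb, div_re, ← add_div, ← jfac]
  congr 1
  simp [jfac, normSq_apply]
  ring

lemma re_moeb_inv_cmPoint (ha : a ≠ 0) (hd : b ^ 2 - 4 * a * c < 0) (M : SL2Z) :
    (moeb M⁻¹ (cmPoint a b c)).re =
      -(qfComp a b c M).2.1 / (2 * a) / normSq (jfac M⁻¹ (cmPoint a b c)) := by
  have : (a : ℝ) ≠ 0 := Int.cast_ne_zero.2 ha
  rw [re_moeb, normSq_cmPoint ha hd, cmPoint_re]
  congr 1
  simp only [Matrix.SpecialLinearGroup.SL2_inv_expl, Matrix.cons_val',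
    Matrix.cons_val_zero, Matrix.cons_val_one, Matrix.cons_val_fin_one, qfComp]
  push_cast
  field_simp
  ring

lemma qfComp_middle_ne_zero (ha : a ≠ 0) (hd : b ^ 2 - 4 * a * c < 0)
    (hre : ∀ M : SL2Z, (moeb M (cmPoint a b c)).re ≠ 0) (M : SL2Z) :
    (qfComp a b c M).2.1 ≠ 0 := by
  intro hB
  apply hre M⁻¹
  rw [re_moeb_inv_cmPoint ha hd, hB, Int.cast_zero, neg_zero, zero_div, zero_div]

lemma qfC_eq_dehomogenize (a b c : ℤ) (M : SL2Z) (z : ℂ) :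
    qfC a b c (M.1 0 0 * z + M.1 0 1) (M.1 1 0 * z + M.1 1 1) =
      dehomogenize (qfComp a b c M).1 (qfComp a b c M).2.1 (qfComp a b c M).2.2 z := by
  simp only [qfC, dehomogenize, qfComp]
  push_cast
  ring

end DefiniteForms

section PeriodSeries

variable {k n : ℕ} {a b c : ℤ}

/-- The integrand `(P ∘ M)(iy, 1)^{-k} y^n` which `M` contributes to the `n`-th period of
`f_{k,P}`, where `P = [a, b, c]`. -/
def compIntegrand (k n : ℕ) (a b c : ℤ) (M : SL2Z) (y : ℝ) : ℂ :=
  periodIntegrand k n (qfComp a b c M).1 (qfComp a b c M).2.1 (qfComp a b c M).2.2 y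

lemma integrable_compIntegrand (hn : n + 1 < 2 * k) (ha : 0 < a) (hd : b ^ 2 - 4 * a * c < 0)
    {M : SL2Z} (hM : (qfComp a b c M).2.1 ≠ 0) : Integrable (compIntegrand k n a b c M) :=
  integrable_periodIntegrand hn (Int.cast_pos.2 (qfComp_leading_pos ha hd M))
    (Int.cast_ne_zero.2 hM) (Int.cast_pos.2 (qfComp_trailing_pos ha hd M))

lemma conj_integral_compIntegrand (hn : n + 1 < 2 * k) (ha : 0 < a)
    (hd : b ^ 2 - 4 * a * c < 0) {M : SL2Z} (hM : (qfComp a b c M).2.1 ≠ 0) :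
    conj (∫ y in Set.Ioi 0, compIntegrand k n a b c M y) =
      (-1) ^ (n + 1) * ∫ y in Set.Ioi 0, compIntegrand k n a b c M y :=
  conj_integral_Ioi_periodIntegrand hn (Int.cast_pos.2 (qfComp_leading_pos ha hd M))
    (Int.cast_ne_zero.2 hM) (Int.cast_pos.2 (qfComp_trailing_pos ha hd M))

lemma four_mul_leading_mul_trailing_le (hd : b ^ 2 - 4 * a * c < 0) {M : SL2Z}
    (hM : (qfComp a b c M).2.1 ≠ 0) :
    4 * (qfComp a b c M).1 * (qfComp a b c M).2.2 ≤
      ((1 + (4 * a * c - b ^ 2)) * (qfComp a b c M).2.1) ^ 2 := by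
  have hB : 0 < (qfComp a b c M).2.1 ^ 2 := by positivity
  have hdiscr := discr_qfComp a b c M
  set D := 4 * a * c - b ^ 2
  have hD : 0 < D := by linarith
  calc 4 * (qfComp a b c M).1 * (qfComp a b c M).2.2
      = (qfComp a b c M).2.1 ^ 2 + D * 1 := by linarith
    _ ≤ (qfComp a b c M).2.1 ^ 2 + D * (qfComp a b c M).2.1 ^ 2 := by gcongr; exact hB
    _ = (1 + D) * (qfComp a b c M).2.1 ^ 2 := by ring
    _ ≤ (1 + D) ^ 2 * (qfComp a b c M).2.1 ^ 2 := by
        gcongr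
        exact le_self_pow₀ (by linarith) two_ne_zero
    _ = ((1 + D) * (qfComp a b c M).2.1) ^ 2 := by rw [mul_pow]

lemma integral_norm_compIntegrand_le (hn : 0 < n) (hnk : n < 2 * k - 2) (ha : 0 < a)
    (hd : b ^ 2 - 4 * a * c < 0) {M : SL2Z} (hM : (qfComp a b c M).2.1 ≠ 0) :
    ∫ y in Set.Ioi 0, ‖compIntegrand k n a b c M y‖ ≤
      (1 + (4 * a * c - b ^ 2)) ^ k / 2 *
        (((qfComp a b c M).1 : ℝ) * ((qfComp a b c M).2.2 : ℝ))⁻¹ := by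
  have hA : (1 : ℝ) ≤ (qfComp a b c M).1 := by exact_mod_cast qfComp_leading_pos ha hd M
  have hC : (1 : ℝ) ≤ (qfComp a b c M).2.2 := by exact_mod_cast qfComp_trailing_pos ha hd M
  have hK : (1 : ℝ) ≤ 1 + (4 * a * c - b ^ 2) := by
    exact_mod_cast (by linarith : 1 ≤ 1 + (4 * a * c - b ^ 2))
  have hAC : (4 * (qfComp a b c M).1 * (qfComp a b c M).2.2 : ℝ) ≤
      ((1 + (4 * a * c - b ^ 2)) * (qfComp a b c M).2.1) ^ 2 := by
    exact_mod_cast four_mul_leading_mul_trailing_le hd hM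
  exact integral_norm_periodIntegrand_le hn hnk hA hC hK hAC

theorem summable_integral_norm_compIntegrand (hn : 0 < n) (hnk : n < 2 * k - 2) (ha : 0 < a)
    (hd : b ^ 2 - 4 * a * c < 0) (hB : ∀ M, (qfComp a b c M).2.1 ≠ 0) :
    Summable fun M => ∫ y in Set.Ioi 0, ‖compIntegrand k n a b c M y‖ :=
  ((summable_inv_qfComp ha hd).mul_left _).of_nonneg_of_le
    (fun _ => integral_nonneg fun _ => norm_nonneg _)
    fun M => integral_norm_compIntegrand_le hn hnk ha hd (hB M)

lemma fkP_mul_pow_eq_tsum (k n : ℕ) (a b c : ℤ) (y : ℝ) :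
    fkP k a b c (y * I) * y ^ n =
      (((b ^ 2 - 4 * a * c).natAbs ^ ((k : ℝ) - 1 / 2) / (2 * π * wP a b c) : ℝ) : ℂ) *
        ∑' M, compIntegrand k n a b c M y := by
  simp only [fkP, qfC_eq_dehomogenize, compIntegrand, periodIntegrand]
  rw [mul_assoc, tsum_mul_right]
  push_cast
  rfl

theorem periodN_fkP_eq_tsum (hn : 0 < n) (hnk : n < 2 * k - 2) (ha : 0 < a)
    (hd : b ^ 2 - 4 * a * c < 0) (hB : ∀ M, (qfComp a b c M).2.1 ≠ 0) :
    periodN n (fkP k a b c) =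
      (((b ^ 2 - 4 * a * c).natAbs ^ ((k : ℝ) - 1 / 2) / (2 * π * wP a b c) : ℝ) : ℂ) *
        ∑' M, ∫ y in Set.Ioi 0, compIntegrand k n a b c M y := by
  have : Countable SL2Z := columnReduction_injective.countable
  simp only [periodN, fkP_mul_pow_eq_tsum]
  rw [integral_const_mul, integral_tsum_of_summable_integral_norm
    (fun M => (integrable_compIntegrand (by omega) ha hd (hB M)).integrableOn)
    (summable_integral_norm_compIntegrand hn hnk ha hd hB)]

theorem conj_periodN_fkP (hn : 0 < n) (hnk : n < 2 * k - 2) (ha : 0 < a)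
    (hd : b ^ 2 - 4 * a * c < 0) (hB : ∀ M, (qfComp a b c M).2.1 ≠ 0) :
    conj (periodN n (fkP k a b c)) = (-1) ^ (n + 1) * periodN n (fkP k a b c) := by
  rw [periodN_fkP_eq_tsum hn hnk ha hd hB, map_mul, conj_ofReal, conj_tsum]
  simp only [fun M => conj_integral_compIntegrand (k := k) (n := n) (by omega) ha hd (hB M)]
  rw [tsum_mul_left, mul_left_comm]

end PeriodSeries

/-- for `0 < n < 2k-2`, the period `r_n(f_{k,P})` is real for odd `n` and purely
imaginary for even `n`. -/
theorem period_fkP_real_or_imaginary (k n : ℕ) (hk : 2 ≤ k) (hn0 : 0 < n) (hn1 : n < 2 * k - 2)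
    (a b c : ℤ) (ha : 0 < a) (hd : b ^ 2 - 4 * a * c < 0)
    (hre : ∀ M : SL2Z, (moeb M (cmPoint a b c)).re ≠ 0) :
    (Odd n → (periodN n (fkP k a b c)).im = 0) ∧
    (Even n → (periodN n (fkP k a b c)).re = 0) := by
  have hconj := conj_periodN_fkP hn0 hn1 ha hd fun M => qfComp_middle_ne_zero ha.ne' hd hre M
  refine ⟨fun hodd => ?_, fun heven => ?_⟩
  · rw [hodd.add_one.neg_one_pow, one_mul] at hconj
    exact conj_eq_iff_im.1 hconj
  · rw [heven.add_one.neg_one_pow, neg_one_mul] at hconj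
    have hre_neg := congrArg re hconj
    rw [conj_re, neg_re] at hre_neg
    exact self_eq_neg.1 hre_neg

end LHMF
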